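/- arXiv:2102.06275 — 5 statements merged into one kernel-verified Lean document; each statement's English description precedes it below -/
import Mathlib

section
/- In any category C and for any objects a and b, the map sending an isomorphism φ : a ≅ b to the triple of families (f ↦ φ.hom ∘ f, g ↦ g ∘ φ.inv, h ↦ φ.hom ∘ h ∘ φ.inv) is a bijection from the set of isomorphisms from a to b onto the set of indiscernibilities from a to b. -/
open CategoryTheory

universe v u

variable {C : Type u} [Category.{v} C]

/-- An indiscernibility from `a` to `b` in a category `C`: families of bijections
`φ_{x•} : Hom(x, a) ≃ Hom(x, b)`, `φ_{•z} : Hom(a, z) ≃ Hom(b, z)` and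
`φ_{••} : Hom(a, a) ≃ Hom(b, b)` satisfying the coherence conditions of STATEMENT 1.
(Composition `g ∘ f` is written `f ≫ g`.) -/
structure Indisc (a b : C) : Type (max u v) where
  left : ∀ x : C, (x ⟶ a) ≃ (x ⟶ b)
  right : ∀ z : C, (a ⟶ z) ≃ (b ⟶ z)
  both : (a ⟶ a) ≃ (b ⟶ b)
  coh₁ : ∀ {x y : C} (f : x ⟶ y) (g : y ⟶ a), left x (f ≫ g) = f ≫ left y g
  coh₂ : ∀ {x z : C} (f : x ⟶ a) (g : a ⟶ z), left x f ≫ right z g = f ≫ g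
  coh₃ : ∀ {z w : C} (f : a ⟶ z) (g : z ⟶ w), right w (f ≫ g) = right z f ≫ g
  coh₄ : ∀ {x : C} (f : x ⟶ a) (g : a ⟶ a), left x (f ≫ g) = left x f ≫ both g
  coh₅ : ∀ {x : C} (f : a ⟶ x) (g : x ⟶ a), both (f ≫ g) = right x f ≫ left x g
  coh₆ : ∀ {x : C} (f : a ⟶ a) (g : a ⟶ x), right x (f ≫ g) = both f ≫ right x g
  coh₇ : ∀ f g : a ⟶ a, both (f ≫ g) = both f ≫ both g
  coh₈ : both (𝟙 a) = 𝟙 b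

/-- The map sending an isomorphism `φ : a ≅ b` to the triple of families
`(f ↦ φ.hom ∘ f, g ↦ g ∘ φ.inv, h ↦ φ.hom ∘ h ∘ φ.inv)`. -/
def isoToIndisc {a b : C} (φ : a ≅ b) : Indisc a b where
  left x :=
    { toFun := fun f => f ≫ φ.hom
      invFun := fun f => f ≫ φ.inv
      left_inv := fun f => by simp
      right_inv := fun f => by simp }
  right z :=
    { toFun := fun g => φ.inv ≫ g
      invFun := fun g => φ.hom ≫ g
      left_inv := fun g => by simp
      right_inv := fun g => by simp }
  both :=
    { toFun := fun h => φ.inv ≫ h ≫ φ.hom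
      invFun := fun h => φ.hom ≫ h ≫ φ.inv
      left_inv := fun h => by simp
      right_inv := fun h => by simp }
  coh₁ f g := by simp
  coh₂ f g := by simp
  coh₃ f g := by simp
  coh₄ f g := by simp
  coh₅ f g := by simp
  coh₆ f g := by simp
  coh₇ f g := by simp
  coh₈ := by simp

/-- For any objects `a` and `b` of a category `C`, the map
`isoToIndisc` is a bijection from the set of isomorphisms `a ≅ b` onto the set of
indiscernibilities from `a` to `b`. -/
theorem isoToIndisc_bijective (a b : C) :
    Function.Bijective (isoToIndisc (a := a) (b := b)) := by
  constructor
  · intro φ ψ h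
    have h1 : (isoToIndisc φ).left a (𝟙 a) = (isoToIndisc ψ).left a (𝟙 a) := by rw [h]
    ext
    simpa [isoToIndisc] using h1
  · intro I
    have hl : ∀ (x : C) (f : x ⟶ a), f ≫ I.left a (𝟙 a) = I.left x f := fun x f => by
      rw [← I.coh₁, Category.comp_id]
    have hr : ∀ (z : C) (g : a ⟶ z), I.right a (𝟙 a) ≫ g = I.right z g := fun z g => by
      rw [← I.coh₃, Category.id_comp]
    have hb : ∀ h : a ⟶ a, I.right a (𝟙 a) ≫ h ≫ I.left a (𝟙 a) = I.both h := fun h => by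
      rw [hl, ← I.coh₅, Category.id_comp]
    refine ⟨⟨I.left a (𝟙 a), I.right a (𝟙 a), ?_, ?_⟩, ?_⟩
    · rw [I.coh₂, Category.id_comp]
    · rw [← I.coh₅, Category.id_comp, I.coh₈]
    · cases I
      simp only [isoToIndisc, Indisc.mk.injEq]
      refine ⟨?_, ?_, ?_⟩
      · funext x
        exact Equiv.ext (hl x)
      · funext z
        exact Equiv.ext (hr z)
      · exact Equiv.ext hb
end

section
/- Let 𝓛 be an inverse category of height p > 0, X : 𝓛 ⥤ Type a functor, and K an object of 𝓛 of rank n + 1. Every element z of the matching object M_K X determines the family α (the restriction of z to the fanout of K at 0) and an element z' of the matching object M_{(K,α)}(∂X), and the fiber of the matching map X K → M_K X over z is in bijection with the fiber of the matching map ∂X(K, α) → M_{(K,α)}(∂X) over z'. -/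
open CategoryTheory

universe w v u v₂ u₂ v₃ u₃

/-- An inverse category: a category equipped with a rank function such that every
morphism weakly decreases rank, and only identities preserve rank. -/
structure InverseRank (C : Type u) [Category.{v} C] where
  rk : C → ℕ
  rk_le : ∀ {K L : C} (f : K ⟶ L), rk L ≤ rk K
  rk_id : ∀ {K L : C} (f : K ⟶ L), rk L = rk K → ∃ h : K = L, f = eqToHom h

/-- An inverse category has height `p` if every object has rank `< p`. -/
def InverseRank.HasHeight {C : Type u} [Category.{v} C] (r : InverseRank C) (p : ℕ) : Prop :=
  ∀ K : C, r.rk K < p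

section

variable {C : Type u} [Category.{v} C]

/-- The objects of rank `m`. -/
abbrev RankObj (rk : C → ℕ) (m : ℕ) : Type u := {L : C // rk L = m}

/-- The fanout of `K` at `m`: pairs `(L, f)` with `L` of rank `m` and `f : K ⟶ L`. -/
abbrev Fanout (rk : C → ℕ) (K : C) (m : ℕ) : Type max u v :=
  Σ L : RankObj rk m, (K ⟶ L.1)

/-- An object of the derivative `∂_M 𝓛`: a pair `(K, α)` with `K` of positive rank
(i.e. of rank `n + 1` for some `n`) and `α` a section of `M` over the fanout of `K`
at `0`. -/
structure DerivObj (rk : C → ℕ) (M : RankObj rk 0 → Type w) : Type max u v w where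
  pt : C
  pos : 0 < rk pt
  sec : ∀ F : Fanout rk pt 0, M F.1

/-- The derivative category `∂_M 𝓛`: a morphism `(K₁, α₁) ⟶ (K₂, α₂)` is a morphism
`f : K₁ ⟶ K₂` of `𝓛` such that `α₁ (L, f ≫ g) = α₂ (L, g)` for every `(L, g)` in the
fanout of `K₂` at `0`. -/
instance derivCategory (rk : C → ℕ) (M : RankObj rk 0 → Type w) :
    Category (DerivObj rk M) where
  Hom A B := {f : A.pt ⟶ B.pt // ∀ F : Fanout rk B.pt 0, A.sec ⟨F.1, f ≫ F.2⟩ = B.sec F}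
  id A := ⟨𝟙 A.pt, fun F => by rw [Category.id_comp]⟩
  comp {A B Z} f g := ⟨f.1 ≫ g.1, fun F => by
    rw [Category.assoc]
    exact (f.2 ⟨F.1, g.1 ≫ F.2⟩).trans (g.2 F)⟩
  id_comp f := Subtype.ext (Category.id_comp f.1)
  comp_id f := Subtype.ext (Category.comp_id f.1)
  assoc f g h := Subtype.ext (Category.assoc f.1 g.1 h.1)

/-- The rank function of the derivative category: `rk (K, α) := rk K - 1`. -/
abbrev derivRk (rk : C → ℕ) (M : RankObj rk 0 → Type w) : DerivObj rk M → ℕ :=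
  fun A => rk A.pt - 1

end

section

variable {C : Type u} [Category.{v} C]

/-- The matching object `M_K X` of a diagram `X : 𝓛 ⥤ Type` at `K`: compatible
families `d` assigning to each `(L, f)` with `rk L < rk K` an element of `X L`. -/
structure MatchingObj (rk : C → ℕ) (X : C ⥤ Type w) (K : C) : Type max u v w where
  d : ∀ (L : C), rk L < rk K → (K ⟶ L) → X.obj L
  compat : ∀ {L₁ L₂ : C} (h₁ : rk L₁ < rk K) (h₂ : rk L₂ < rk K) (g : L₁ ⟶ L₂),
    rk L₂ < rk L₁ → ∀ f₁ : K ⟶ L₁, X.map g (d L₁ h₁ f₁) = d L₂ h₂ (f₁ ≫ g)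

/-- The matching map `X K → M_K X`, sending `x` to the family `(L, f) ↦ X(f)(x)`. -/
def matchMap (rk : C → ℕ) (X : C ⥤ Type w) (K : C) (x : X.obj K) : MatchingObj rk X K where
  d L _ f := X.map f x
  compat h₁ h₂ g hg f₁ := (FunctorToTypes.map_comp_apply X f₁ g x).symm

/-- The restriction `X₀` of a diagram `X : 𝓛 ⥤ Type` to the rank-`0` objects. -/
def diagRestrict (rk : C → ℕ) (X : C ⥤ Type w) : RankObj rk 0 → Type w :=
  fun L => X.obj L.1

/-- The induced diagram `∂X : ∂_{X₀}𝓛 ⥤ Type` on the derivative: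
`∂X (K, α) := { x : X K | X(f)(x) = α (L, f) for all (L, f) in the fanout of K at 0 }`. -/
def derivDiag (rk : C → ℕ) (X : C ⥤ Type w) :
    DerivObj rk (diagRestrict rk X) ⥤ Type w where
  obj A := {x : X.obj A.pt // ∀ F : Fanout rk A.pt 0, X.map F.2 x = A.sec F}
  map {A B} f := ↾fun x => ⟨X.map f.1 x.1, fun F => by
    rw [← FunctorToTypes.map_comp_apply]
    exact (x.2 ⟨F.1, f.1 ≫ F.2⟩).trans (f.2 F)⟩
  map_id A := by
    refine ConcreteCategory.hom_ext _ _ fun x => ?_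
    exact Subtype.ext (FunctorToTypes.map_id_apply X x.1)
  map_comp {A B Z} f g := by
    refine ConcreteCategory.hom_ext _ _ fun x => ?_
    exact Subtype.ext (FunctorToTypes.map_comp_apply X f.1 g.1 x.1)

end

section

variable {C : Type u} [Category.{v} C]

/-- The restriction of an element `z` of the matching object `M_K X` to the fanout
of `K` at `0`: the family `α`. -/
def matchSec (rk : C → ℕ) (X : C ⥤ Type w) (K : C) (hpos : 0 < rk K)
    (z : MatchingObj rk X K) : ∀ F : Fanout rk K 0, diagRestrict rk X F.1 :=
  fun F => z.d F.1.1 (by have h := F.1.2; omega) F.2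

/-- The object `(K, α)` of the derivative determined by an element of the matching
object `M_K X`. -/
def matchObjDeriv (rk : C → ℕ) (X : C ⥤ Type w) (K : C) (hpos : 0 < rk K)
    (z : MatchingObj rk X K) : DerivObj rk (diagRestrict rk X) :=
  ⟨K, hpos, matchSec rk X K hpos z⟩

/-- The element `z'` of the matching object `M_{(K,α)}(∂X)` determined by an element
`z` of the matching object `M_K X`. -/
def derivedMatching (rk : C → ℕ) (X : C ⥤ Type w) (K : C) (hpos : 0 < rk K)
    (z : MatchingObj rk X K) :
    MatchingObj (fun A : DerivObj rk (diagRestrict rk X) => rk A.pt - 1)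
      (derivDiag rk X) (matchObjDeriv rk X K hpos z) where
  d B hB f :=
    have hpt : (matchObjDeriv rk X K hpos z).pt = K := rfl
    have hB' : rk B.pt < rk K := by rw [hpt] at hB; have h1 := B.pos; omega
    ⟨z.d B.pt hB' f.1, fun F => by
      have h2 := z.compat (L₁ := B.pt) (L₂ := F.1.1) hB'
        (by have h3 := F.1.2; omega) F.2 (by have h3 := F.1.2; have h1 := B.pos; omega) f.1
      exact h2.trans (f.2 F)⟩
  compat {B₁ B₂} h₁ h₂ g hg f₁ := by
    have hpt : (matchObjDeriv rk X K hpos z).pt = K := rfl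
    rw [hpt] at h₁ h₂
    apply Subtype.ext
    exact z.compat (by have := B₁.pos; omega) (by have := B₂.pos; omega) g.1
      (by have := B₁.pos; have := B₂.pos; omega) f₁.1

end

/-- Let `𝓛` be an inverse category of height `p > 0`, `X : 𝓛 ⥤ Type` a
functor, and `K` an object of rank `n + 1`.  Every element `z` of the matching object
`M_K X` determines the family `α` (its restriction to the fanout of `K` at `0`) and
an element `z'` of the matching object `M_{(K,α)}(∂X)`, and the fiber of the matching
map `X K → M_K X` over `z` is in bijection with the fiber of the matching map
`∂X (K, α) → M_{(K,α)}(∂X)` over `z'`. -/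
theorem matching_fiber_equiv {C : Type u} [Category.{v} C] (r : InverseRank C)
    (p : ℕ) (hp : 0 < p) (hh : r.HasHeight p) (X : C ⥤ Type w) (K : C) (n : ℕ)
    (hK : r.rk K = n + 1) (z : MatchingObj r.rk X K) :
    Nonempty
      ({x : X.obj K // matchMap r.rk X K x = z} ≃
        {y : (derivDiag r.rk X).obj (matchObjDeriv r.rk X K (by omega) z) //
          matchMap (fun A : DerivObj r.rk (diagRestrict r.rk X) => r.rk A.pt - 1)
            (derivDiag r.rk X) (matchObjDeriv r.rk X K (by omega) z) y
            = derivedMatching r.rk X K (by omega) z}) := by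
  have hpos : 0 < r.rk K := by omega
  have ext' : ∀ {D : Type (max u v w)} [Category.{v} D] (rk : D → ℕ) (Y : D ⥤ Type w) (A : D)
      (a b : MatchingObj rk Y A), (∀ L h f, a.d L h f = b.d L h f) → a = b := by
    intro D _ rk Y A a b h
    cases a; cases b
    congr
    funext L h' f
    exact h L h' f
  have ext₀ : ∀ (a b : MatchingObj r.rk X K), (∀ L h f, a.d L h f = b.d L h f) → a = b := by
    intro a b h
    cases a; cases b
    congr
    funext L h' f
    exact h L h' f
  have key : ∀ x : X.obj K, matchMap r.rk X K x = z →
      ∀ (L : C) (h : r.rk L < r.rk K) (f : K ⟶ L), X.map f x = z.d L h f := by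
    intro x hx L h f
    rw [← hx]
    rfl
  refine ⟨{
    toFun := fun x => ⟨⟨x.1, fun F => key x.1 x.2 F.1.1 (by have := F.1.2; omega) F.2⟩, ?_⟩
    invFun := fun y => ⟨y.1.1, ?_⟩
    left_inv := fun x => rfl
    right_inv := fun y => rfl }⟩
  · refine ext' _ _ _ _ _ fun B hB f => ?_
    apply Subtype.ext
    have hB' : r.rk B.pt - 1 < r.rk K - 1 := hB
    exact key x.1 x.2 B.pt (by omega) f.1
  · refine ext₀ _ _ fun L h f => ?_
    by_cases h0 : r.rk L = 0
    · exact y.1.2 ⟨⟨L, h0⟩, f⟩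
    · let B : DerivObj r.rk (diagRestrict r.rk X) :=
        ⟨L, Nat.pos_of_ne_zero h0, fun F => z.d F.1.1 (by have := F.1.2; omega) (f ≫ F.2)⟩
      let g : matchObjDeriv r.rk X K hpos z ⟶ B := ⟨f, fun F => rfl⟩
      have hB : r.rk L - 1 < r.rk K - 1 := by omega
      have e := congrArg (fun m => (m.d B hB g).1) y.2
      exact e
end

section
/- Let 𝓛 be an inverse category of height p > 0 and M a family of types indexed by 𝓛(0). Then the derivative ∂_M 𝓛, equipped with the rank function rk(K, α) := rk K − 1, is an inverse category of height p − 1; moreover, for every object (K, α) of rank n in ∂_M 𝓛 and every m < n, the map sending an element ((L, β), (f, _)) of the fanout of (K, α) at m to the pair (L, f) is a bijection onto the fanout of K at m + 1 in 𝓛. -/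
open CategoryTheory

universe w v u v₂ u₂ v₃ u₃

/-- The map sending an element `((L, β), (f, _))` of the fanout of `(K, α)` at `m`
in the derivative `∂_M 𝓛` to the pair `(L, f)` in the fanout of `K` at `m + 1`
in `𝓛`. -/
def derivFanoutDown {C : Type u} [Category.{v} C] (rk : C → ℕ)
    (M : RankObj rk 0 → Type w) (A : DerivObj rk M) (m : ℕ) :
    Fanout (derivRk rk M) A m → Fanout rk A.pt (m + 1) :=
  fun F => ⟨⟨F.1.1.pt, by have h1 : rk F.1.1.pt - 1 = m := F.1.2; have h2 := F.1.1.pos; omega⟩, F.2.1⟩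

/-- For an inverse category `𝓛` of height `p > 0` and a family `M` of
types indexed by `𝓛(0)`, the derivative `∂_M 𝓛` equipped with the rank function
`rk (K, α) := rk K - 1` is an inverse category of height `p - 1`; moreover for every
object `(K, α)` of rank `n` in `∂_M 𝓛` and every `m < n`, the map
`((L, β), (f, _)) ↦ (L, f)` is a bijection from the fanout of `(K, α)` at `m` onto
the fanout of `K` at `m + 1` in `𝓛`. -/
theorem deriv_isInverse_and_fanout_bijective {C : Type u} [Category.{v} C]
    (r : InverseRank C) (p : ℕ) (hp : 0 < p) (hh : r.HasHeight p)
    (M : RankObj r.rk 0 → Type w) :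
    (∃ dr : InverseRank (DerivObj r.rk M),
        dr.rk = derivRk r.rk M ∧ dr.HasHeight (p - 1)) ∧
      ∀ (A : DerivObj r.rk M) (m : ℕ), m < derivRk r.rk M A →
        Function.Bijective (derivFanoutDown r.rk M A m) := by
  refine ⟨⟨⟨derivRk r.rk M, ?_, ?_⟩, rfl, ?_⟩, ?_⟩
  · intro K L f
    exact Nat.sub_le_sub_right (r.rk_le f.1) 1
  · intro K L f h
    have h1 : r.rk L.pt - 1 = r.rk K.pt - 1 := h
    have hK := K.pos
    have hL := L.pos
    obtain ⟨e, he⟩ := r.rk_id f.1 (by omega)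
    obtain ⟨K, hK', s⟩ := K
    obtain ⟨L, hL', t⟩ := L
    obtain ⟨f, hf⟩ := f
    dsimp only at e he f hf
    subst e
    have he' : f = 𝟙 K := he
    subst he'
    have hst : s = t := by
      funext F
      have := hf F
      rw [Category.id_comp] at this
      exact this
    subst hst
    exact ⟨rfl, rfl⟩
  · intro K
    have h1 := hh K.pt
    have h2 := K.pos
    change r.rk K.pt - 1 < p - 1
    omega
  · intro A m _
    constructor
    · rintro ⟨⟨⟨L, hL, s⟩, hr⟩, ⟨f, hf⟩⟩ ⟨⟨⟨L', hL', s'⟩, hr'⟩, ⟨f', hf'⟩⟩ h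
      dsimp only at f f' hf hf'
      obtain ⟨h1, h2⟩ := Sigma.mk.inj_iff.1 h
      have h3 : L = L' := congrArg Subtype.val h1
      subst h3
      have h4 : f = f' := eq_of_heq h2
      subst h4
      have hst : s = s' := by
        funext F
        exact (hf F).symm.trans (hf' F)
      subst hst
      rfl
    · rintro ⟨⟨L, hL⟩, f⟩
      exact ⟨⟨⟨⟨L, by omega, fun F => A.sec ⟨F.1, f ≫ F.2⟩⟩, by simp [derivRk, hL]⟩,
        ⟨f, fun F => rfl⟩⟩, rfl⟩
end

section
/- Let 𝓛 be an inverse category of height p > 0 and M a family of types indexed by 𝓛(0), and let 𝓛_{>0} denote the full subcategory of 𝓛 on the objects of positive rank, regarded as an inverse category with rank function rk − 1. Then the forgetful functor U : ∂_M 𝓛 ⥤ 𝓛_{>0}, sending an object (K, α) to K and a morphism (f, φ) to f, is a discrete opfibration. -/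
open CategoryTheory

universe w v u v₂ u₂ v₃ u₃

section

variable {C : Type u} [Category.{v} C] {D : Type u₂} [Category.{v₂} D]
  {E : Type u₃} [Category.{v₃} E]

/-- A functor between inverse categories is rank-preserving if `rk (F K) = rk K`. -/
def RankPres (F : C ⥤ D) (rkC : C → ℕ) (rkD : D → ℕ) : Prop :=
  ∀ K : C, rkD (F.obj K) = rkC K

/-- The induced map on fanouts of a rank-preserving functor, sending `(L, f)` to
`(F L, F f)`. -/
def fanoutMap (F : C ⥤ D) {rkC : C → ℕ} {rkD : D → ℕ} (hF : RankPres F rkC rkD)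
    (K : C) (m : ℕ) : Fanout rkC K m → Fanout rkD (F.obj K) m :=
  fun G => ⟨⟨F.obj G.1.1, (hF G.1.1).trans G.1.2⟩, F.map G.2⟩

/-- A rank-preserving functor is a discrete opfibration if all its induced maps on
fanouts (at `m < rk K`) are bijections. -/
structure IsDiscOpfib (F : C ⥤ D) (rkC : C → ℕ) (rkD : D → ℕ) : Prop where
  pres : RankPres F rkC rkD
  bij : ∀ (K : C) (m : ℕ), m < rkC K → Function.Bijective (fanoutMap F pres K m)

/-- The fanout bijection of a discrete opfibration, as an equivalence. -/
noncomputable def fanoutEquiv (F : C ⥤ D) {rkC : C → ℕ} {rkD : D → ℕ}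
    (hF : IsDiscOpfib F rkC rkD) (K : C) (m : ℕ) (hm : m < rkC K) :
    Fanout rkC K m ≃ Fanout rkD (F.obj K) m :=
  Equiv.ofBijective _ (hF.bij K m hm)

theorem isDiscOpfib_id (rk : C → ℕ) : IsDiscOpfib (𝟭 C) rk rk := by
  refine ⟨fun _ => rfl, fun K m hm => ?_⟩
  exact Function.bijective_id

theorem isDiscOpfib_comp {F : C ⥤ D} {G : D ⥤ E} {rkC : C → ℕ} {rkD : D → ℕ}
    {rkE : E → ℕ} (hF : IsDiscOpfib F rkC rkD) (hG : IsDiscOpfib G rkD rkE) :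
    IsDiscOpfib (F ⋙ G) rkC rkE := by
  refine ⟨fun K => (hG.pres (F.obj K)).trans (hF.pres K), fun K m hm => ?_⟩
  exact (hG.bij (F.obj K) m (by rw [hF.pres]; exact hm)).comp (hF.bij K m hm)

end

/-- The forgetful functor `U : ∂_M 𝓛 ⥤ 𝓛_{>0}` from the derivative to the full
subcategory of `𝓛` on the objects of positive rank, sending `(K, α)` to `K` and
`(f, φ)` to `f`. -/
def forgetDeriv {C : Type u} [Category.{v} C] (rk : C → ℕ)
    (M : RankObj rk 0 → Type w) :
    DerivObj rk M ⥤ ObjectProperty.FullSubcategory (fun K : C => 0 < rk K) where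
  obj A := ⟨A.pt, A.pos⟩
  map f := ObjectProperty.homMk f.1
  map_id A := rfl
  map_comp f g := rfl

/-- For an inverse category `𝓛` of height `p > 0` and a family `M` of
types indexed by `𝓛(0)`, the forgetful functor `U : ∂_M 𝓛 ⥤ 𝓛_{>0}` is a discrete
opfibration, where `∂_M 𝓛` carries the rank function `rk (K, α) = rk K - 1` and
`𝓛_{>0}` carries the rank function `rk - 1`. -/
theorem forgetDeriv_isDiscOpfib {C : Type u} [Category.{v} C] (r : InverseRank C)
    (p : ℕ) (hp : 0 < p) (hh : r.HasHeight p) (M : RankObj r.rk 0 → Type w) :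
    IsDiscOpfib (forgetDeriv r.rk M) (derivRk r.rk M)
      (fun K : ObjectProperty.FullSubcategory (fun K : C => 0 < r.rk K) => r.rk K.obj - 1) := by
  refine ⟨fun _ => rfl, fun K m _ => ?_⟩
  refine Function.bijective_iff_has_inverse.mpr
    ⟨fun H => ⟨⟨⟨H.1.1.obj, H.1.1.property, fun F => K.sec ⟨F.1, H.2.hom ≫ F.2⟩⟩, H.1.2⟩,
      ⟨H.2.hom, fun _ => rfl⟩⟩, ?_, fun _ => rfl⟩
  rintro ⟨⟨⟨L, pos, sec⟩, h⟩, ⟨f, hf⟩⟩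
  change K.pt ⟶ L at f
  have hs : (fun F : Fanout r.rk L 0 => K.sec ⟨F.1, f ≫ F.2⟩) = sec := funext hf
  subst hs
  rfl
end

section
/- Let F : 𝓛 ⥤ 𝓜 be a discrete opfibration between inverse categories of height p > 0 and X : 𝓜 ⥤ Type a functor. Write X₀ for the restriction of X to 𝓜(0) and F₀ for the restriction of F to rank-0 objects. Then the restriction of the composite F ⋙ X to 𝓛(0) equals X₀ ∘ F₀, and there is a natural isomorphism between the induced diagram ∂(F ⋙ X) : ∂_{X₀ ∘ F₀}𝓛 ⥤ Type and the composite of the derived functor ∂_{F, id} : ∂_{X₀ ∘ F₀}𝓛 ⥤ ∂_{X₀}𝓜 with ∂X : ∂_{X₀}𝓜 ⥤ Type. -/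
open CategoryTheory

universe w v u v₂ u₂ v₃ u₃

theorem secHEq {α : Sort*} {P : α → Sort*} (s : ∀ a, P a) {a b : α} (h : a = b) :
    HEq (s a) (s b) := by rw [h]

section

variable {C : Type u} [Category.{v} C] {D : Type u₂} [Category.{v₂} D]

/-- The section part of the object map of the derived functor `∂_{H,h}`:
`β F := h (α (H⁻¹ F))`, where `H⁻¹` is the inverse of the fanout bijection of `H`
at rank `0`. -/
noncomputable def derivedSec (H : C ⥤ D) {rkC : C → ℕ} {rkD : D → ℕ}
    (hH : IsDiscOpfib H rkC rkD)
    (L₀ : RankObj rkC 0 → Type w) (M₀ : RankObj rkD 0 → Type w)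
    (h : ∀ K : RankObj rkC 0, L₀ K → M₀ ⟨H.obj K.1, (hH.pres K.1).trans K.2⟩)
    (A : DerivObj rkC L₀) : ∀ F : Fanout rkD (H.obj A.pt) 0, M₀ F.1 :=
  Equiv.piCongrLeft (fun F : Fanout rkD (H.obj A.pt) 0 => M₀ F.1)
    (fanoutEquiv H hH A.pt 0 A.pos) (fun G => h G.1 (A.sec G))

theorem derivedSec_apply (H : C ⥤ D) {rkC : C → ℕ} {rkD : D → ℕ}
    (hH : IsDiscOpfib H rkC rkD)
    (L₀ : RankObj rkC 0 → Type w) (M₀ : RankObj rkD 0 → Type w)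
    (h : ∀ K : RankObj rkC 0, L₀ K → M₀ ⟨H.obj K.1, (hH.pres K.1).trans K.2⟩)
    (A : DerivObj rkC L₀) (G : Fanout rkC A.pt 0) :
    derivedSec H hH L₀ M₀ h A (fanoutEquiv H hH A.pt 0 A.pos G) = h G.1 (A.sec G) :=
  Equiv.piCongrLeft_apply_apply _ _ _ _

/-- The derived functor `∂_{H,h} : ∂_{L₀}𝓛 ⥤ ∂_{M₀}𝓜` of a discrete opfibration
`H : 𝓛 ⥤ 𝓜` together with a family of functions `h_K : L₀ K → M₀ (H K)`: it sends
`(K, α)` to `(H K, β)` where `β F := h (α (H⁻¹ F))`, using the inverse of the fanout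
bijection of `H` at rank `0`, and sends `(f, φ)` to `(H f, ψ)`. -/
noncomputable def derivedFunctor (H : C ⥤ D) {rkC : C → ℕ} {rkD : D → ℕ}
    (hH : IsDiscOpfib H rkC rkD)
    (L₀ : RankObj rkC 0 → Type w) (M₀ : RankObj rkD 0 → Type w)
    (h : ∀ K : RankObj rkC 0, L₀ K → M₀ ⟨H.obj K.1, (hH.pres K.1).trans K.2⟩) :
    DerivObj rkC L₀ ⥤ DerivObj rkD M₀ where
  obj A :=
    { pt := H.obj A.pt
      pos := by rw [hH.pres]; exact A.pos
      sec := derivedSec H hH L₀ M₀ h A }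
  map {A B} f := ⟨H.map f.1, by
    intro F
    obtain ⟨G, rfl⟩ := (fanoutEquiv H hH B.pt 0 B.pos).surjective F
    have key : (⟨(fanoutEquiv H hH B.pt 0 B.pos G).1,
          H.map f.1 ≫ (fanoutEquiv H hH B.pt 0 B.pos G).2⟩ : Fanout rkD (H.obj A.pt) 0)
        = fanoutEquiv H hH A.pt 0 A.pos ⟨G.1, f.1 ≫ G.2⟩ := by
      show (⟨⟨H.obj G.1.1, (hH.pres G.1.1).trans G.1.2⟩, H.map f.1 ≫ H.map G.2⟩ :
          Fanout rkD (H.obj A.pt) 0) = ⟨⟨H.obj G.1.1, (hH.pres G.1.1).trans G.1.2⟩,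
          H.map (f.1 ≫ G.2)⟩
      rw [H.map_comp]
    have h1 := secHEq (derivedSec H hH L₀ M₀ h A) key
    have h2 := derivedSec_apply H hH L₀ M₀ h A ⟨G.1, f.1 ≫ G.2⟩
    have h3 := derivedSec_apply H hH L₀ M₀ h B G
    have h4 : h G.1 (A.sec ⟨G.1, f.1 ≫ G.2⟩) = h G.1 (B.sec G) := congrArg (h G.1) (f.2 G)
    exact eq_of_heq (h1.trans (heq_of_eq (h2.trans (h4.trans h3.symm))))⟩
  map_id A := Subtype.ext (H.map_id A.pt)
  map_comp f g := Subtype.ext (H.map_comp f.1 g.1)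

end

/-- The action of a rank-preserving functor on rank-0 objects. -/
def rankZeroMap {C : Type u} [Category.{v} C] {D : Type u₂} [Category.{v₂} D]
    (F : C ⥤ D) {rkC : C → ℕ} {rkD : D → ℕ} (hF : RankPres F rkC rkD) :
    RankObj rkC 0 → RankObj rkD 0 :=
  fun L => ⟨F.obj L.1, (hF L.1).trans L.2⟩

/-- Let `F : 𝓛 ⥤ 𝓜` be a discrete opfibration between inverse
categories of height `p > 0` and `X : 𝓜 ⥤ Type` a functor.  Then the restriction of
`F ⋙ X` to `𝓛(0)` equals `X₀ ∘ F₀`, and there is a natural isomorphism between the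
induced diagram `∂(F ⋙ X) : ∂_{X₀ ∘ F₀}𝓛 ⥤ Type` and the composite of the derived
functor `∂_{F, id} : ∂_{X₀ ∘ F₀}𝓛 ⥤ ∂_{X₀}𝓜` with `∂X : ∂_{X₀}𝓜 ⥤ Type`. -/
theorem derivDiag_comp_discOpfib {C : Type u} [Category.{v} C] {D : Type u₂}
    [Category.{v₂} D] (r : InverseRank C) (s : InverseRank D) (p : ℕ) (hp : 0 < p)
    (hhr : r.HasHeight p) (hhs : s.HasHeight p) (F : C ⥤ D)
    (hF : IsDiscOpfib F r.rk s.rk) (X : D ⥤ Type w) :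
    (diagRestrict r.rk (F ⋙ X) = diagRestrict s.rk X ∘ rankZeroMap F hF.pres) ∧
      Nonempty
        (derivDiag r.rk (F ⋙ X) ≅
          derivedFunctor F hF (diagRestrict r.rk (F ⋙ X)) (diagRestrict s.rk X)
              (fun _ x => x) ⋙
            derivDiag s.rk X) := by
  refine ⟨rfl, ⟨NatIso.ofComponents (fun A => Equiv.toIso (Equiv.subtypeEquivRight ?_)) ?_⟩⟩
  · intro x
    constructor
    · intro hx G
      obtain ⟨G, rfl⟩ := (fanoutEquiv F hF A.pt 0 A.pos).surjective G
      exact (hx G).trans (derivedSec_apply F hF (diagRestrict r.rk (F ⋙ X))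
        (diagRestrict s.rk X) (fun _ x => x) A G).symm
    · intro hx G
      exact (hx (fanoutEquiv F hF A.pt 0 A.pos G)).trans
        (derivedSec_apply F hF (diagRestrict r.rk (F ⋙ X))
        (diagRestrict s.rk X) (fun _ x => x) A G)
  · intro A B f
    refine ConcreteCategory.hom_ext _ _ fun x => ?_
    exact Subtype.ext rfl
end
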